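/- Let G be a log combinatorial type, V_max ⊆ V a nonempty subset, and M̄(G, V_max) ⊆ B the minimal monoid with uniform maximal degeneracy, with quotient map q : A → B. Let P be a cancellative, torsion-free, saturated commutative monoid, and let ē_v ∈ P (v ∈ V) and ρ̄_l ∈ P (l ∈ E) satisfy ē_v = 0 for v ∈ Vⁿ and ē_{v'_l} = ē_{v_l} + c_l·ρ̄_l for l ∈ E. Assume moreover that ē_{v₁} = ē_{v₂} for all v₁, v₂ ∈ V_max (call the common value ē_max), and that for every v ∈ V there exists p_v ∈ P with ē_max = ē_v + p_v. Then q maps M̄(G) into M̄(G, V_max), inducing a monoid homomorphism q̄ : M̄(G) → M̄(G, V_max), and there exists a unique monoid homomorphism φ_max : M̄(G, V_max) → P such that φ_max ∘ q̄ = φ, where φ : M̄(G) → P is the canonical homomorphism sending the image of e_v to ē_v and the image of ρ_l to ρ̄_l; moreover φ_max sends e_max − q(e_v) to p_v for every v ∈ V. -/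

import Mathlib

/-!
The given elements of `P` define a group homomorphism from the free group to the Grothendieck
group `K` of `P`. It kills the relations of `G` and the differences along `V_max`, and, since `K`
is torsion-free, it also kills the torsion divided out in `A` and in `B`; so it descends to
`gB : B → K` (`exists_hom_B`). As `gB` sends the generators of `N′` to `ē_v`, `ρ̄_l` and `p_v`, it
maps `N′` into `P`, and saturatedness of `P` makes it map the saturation `M̄(G, V_max)` into `P` too
(`exists_lift_saturationIn`); this is `φ_max`.

Everything else follows from one rigidity principle (`agree_on_saturationIn`): a homomorphism from
the saturation of a generated submonoid to `P` that agrees with a group homomorphism to `K` on the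
generators agrees with it everywhere. Applied to `φ` and `gB ∘ q` on `M̄(G)` it gives
`φ_max ∘ q̄ = φ`; applied to any other factorization and `gB` on `M̄(G, V_max)` it gives uniqueness
and the value `p_v` at `e_max − q(e_v)`, because `e_max − q(e_v)` is determined by `q(e_v)`
and `e_max` through cancellation.
-/


/-- The saturation of a submonoid `N` in an ambient abelian group `A`:
the smallest submonoid of `A` containing `N` that is saturated in `A`. -/
def AddSubmonoid.saturationIn {A : Type*} [AddCommGroup A] (N : AddSubmonoid A) :
    AddSubmonoid A where
  carrier := {x | ∃ n : ℕ, 1 ≤ n ∧ n • x ∈ N}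
  zero_mem' := ⟨1, le_refl 1, by simpa using N.zero_mem⟩
  add_mem' := by
    rintro x y ⟨n, hn, hx⟩ ⟨m, hm, hy⟩
    refine ⟨n * m, Nat.mul_pos hn hm, ?_⟩
    have h : (n * m) • (x + y) = m • (n • x) + n • (m • y) := by
      rw [smul_add, ← mul_smul, ← mul_smul, mul_comm m n]
    rw [h]
    exact N.add_mem (N.nsmul_mem hx m) (N.nsmul_mem hy n)

/-- A log combinatorial type: a finite set of vertices partitioned into
non-degenerate (`Vn`) and degenerate vertices, a finite set of edges with
endpoints `src`, `tgt`, and a contact order `c l : ℕ` on each edge. -/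
structure LogCombType where
  V : Type
  E : Type
  [fintV : Fintype V]
  [fintE : Fintype E]
  Vn : Set V
  src : E → V
  tgt : E → V
  c : E → ℕ

attribute [instance] LogCombType.fintV LogCombType.fintE

namespace LogCombType

variable (G : LogCombType)

/-- The free abelian group on the generators `e_v` and `ρ_l`. -/
abbrev Free : Type := FreeAbelianGroup (G.V ⊕ G.E)

/-- The generator `e_v`. -/
def eFree (v : G.V) : G.Free := FreeAbelianGroup.of (Sum.inl v)

/-- The generator `ρ_l`. -/
def ρFree (l : G.E) : G.Free := FreeAbelianGroup.of (Sum.inr l)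

/-- The subgroup of relations: `e_v = 0` for `v ∈ Vⁿ` and
`e_{tgt l} = e_{src l} + c l • ρ_l` for all edges `l`. -/
def rels : AddSubgroup G.Free :=
  AddSubgroup.closure
    ({x | ∃ v ∈ G.Vn, x = G.eFree v} ∪
     {x | ∃ l : G.E, x = G.eFree (G.tgt l) - (G.eFree (G.src l) + G.c l • G.ρFree l)})

/-- The presented abelian group `𝒢`. -/
abbrev Pres : Type := G.Free ⧸ G.rels

/-- The torsion-free quotient `A = 𝒢/𝒢ᵗ`. -/
abbrev A : Type := G.Pres ⧸ AddCommGroup.torsion G.Pres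

/-- The image of `e_v` in `A`. -/
def eA (v : G.V) : G.A :=
  QuotientAddGroup.mk' _ (QuotientAddGroup.mk' G.rels (G.eFree v))

/-- The image of `ρ_l` in `A`. -/
def ρA (l : G.E) : G.A :=
  QuotientAddGroup.mk' _ (QuotientAddGroup.mk' G.rels (G.ρFree l))

/-- The submonoid `N ⊆ A` generated by the images of the `e_v` and `ρ_l`. -/
def N : AddSubmonoid G.A :=
  AddSubmonoid.closure (Set.range G.eA ∪ Set.range G.ρA)

/-- The minimal monoid `M̄(G)`: the saturation of `N` in `A`. -/
def minMonoid : AddSubmonoid G.A := G.N.saturationIn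

end LogCombType

namespace LogCombType

variable (G : LogCombType)

/-- The subgroup of `A` generated by the differences `e_{v₁} − e_{v₂}`
for `v₁, v₂ ∈ V_max`. -/
def simRel (Vmax : Set G.V) : AddSubgroup G.A :=
  AddSubgroup.closure {x | ∃ v₁ ∈ Vmax, ∃ v₂ ∈ Vmax, x = G.eA v₁ - G.eA v₂}

/-- The torsion-free quotient `B = ((A/∼)/torsion)`. -/
abbrev B (Vmax : Set G.V) : Type :=
  (G.A ⧸ G.simRel Vmax) ⧸ AddCommGroup.torsion (G.A ⧸ G.simRel Vmax)

/-- The quotient group homomorphism `q : A → B`. -/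
def qB (Vmax : Set G.V) : G.A →+ G.B Vmax :=
  (QuotientAddGroup.mk' (AddCommGroup.torsion (G.A ⧸ G.simRel Vmax))).comp
    (QuotientAddGroup.mk' (G.simRel Vmax))

/-- The common image `e_max = q (e_{v₀})` of the vertices of `V_max`, computed at a
chosen vertex `v₀ ∈ V_max`. -/
def emaxB (Vmax : Set G.V) (v₀ : G.V) : G.B Vmax := G.qB Vmax (G.eA v₀)

/-- The submonoid `N′ ⊆ B` generated by `q(N)` together with the elements
`e_max − q(e_v)` for all vertices `v`. -/
def Nmax (Vmax : Set G.V) (v₀ : G.V) : AddSubmonoid (G.B Vmax) :=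
  AddSubmonoid.closure
    ((G.qB Vmax '' (G.N : Set G.A)) ∪
      Set.range fun v : G.V => G.emaxB Vmax v₀ - G.qB Vmax (G.eA v))

/-- The minimal monoid with uniform maximal degeneracy `M̄(G, V_max)`:
the saturation of `N′` in `B`. -/
def maxMonoid (Vmax : Set G.V) (v₀ : G.V) : AddSubmonoid (G.B Vmax) :=
  (G.Nmax Vmax v₀).saturationIn

end LogCombType

/-- A commutative monoid `P` is saturated if (it is cancellative and) for every
element `x` of its Grothendieck group `P^gp`, if `n • x` lies in the image of `P`
for some `n ≥ 1`, then `x` lies in the image of `P`. -/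
def IsSaturatedAddMonoid (P : Type*) [AddCommMonoid P] : Prop :=
  ∀ (x : AddLocalization (⊤ : AddSubmonoid P)) (n : ℕ), 1 ≤ n →
    (∃ p : P, AddLocalization.mk p 0 = n • x) → ∃ p : P, AddLocalization.mk p 0 = x

namespace LogCombType

open Algebra.GrothendieckAddGroup (of)

/-- A homomorphism to a torsion-free group descends to the quotient by a subgroup `H` that it
kills, followed by the quotient by torsion. -/
lemma exists_descend {X K : Type*} [AddCommGroup X] [AddCommGroup K]
    (hK : ∀ (n : ℕ), 1 ≤ n → ∀ x : K, n • x = 0 → x = 0) (H : AddSubgroup X)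
    (f : X →+ K) (hf : H ≤ f.ker) :
    ∃ g : ((X ⧸ H) ⧸ AddCommGroup.torsion (X ⧸ H)) →+ K,
      ∀ x, g (QuotientAddGroup.mk' _ (QuotientAddGroup.mk' H x)) = f x := by
  have htors : AddCommGroup.torsion (X ⧸ H) ≤ (QuotientAddGroup.lift H f hf).ker := by
    intro y hy
    obtain ⟨n, hn, hny⟩ := isOfFinAddOrder_iff_nsmul_eq_zero.1 hy
    rw [AddMonoidHom.mem_ker]
    refine hK n hn _ ?_
    rw [← map_nsmul, hny, map_zero]
  exact ⟨QuotientAddGroup.lift _ (QuotientAddGroup.lift H f hf) htors, fun x => rfl⟩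

/-- The Grothendieck group of a cancellative torsion-free monoid is torsion-free. -/
lemma grothendieck_torsionFree {P : Type*} [AddCancelCommMonoid P]
    (htf : ∀ (n : ℕ), 1 ≤ n → ∀ p q : P, n • p = n • q → p = q)
    (n : ℕ) (hn : 1 ≤ n) (x : Algebra.GrothendieckAddGroup P) (hx : n • x = 0) : x = 0 := by
  induction x using AddLocalization.ind with
  | H y =>
    obtain ⟨a, b⟩ := y
    have hab : AddLocalization.mk a b = of a - of (b : P) := by
      simp [of, ← AddLocalization.mk_zero_eq_addMonoidOf_mk]
    rw [hab] at hx ⊢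
    rw [smul_sub, sub_eq_zero, ← map_nsmul, ← map_nsmul] at hx
    rw [htf n hn _ _ (Algebra.GrothendieckAddGroup.of_injective hx), sub_self]

/-- The generators determine a homomorphism on the saturation: torsion-freeness of the target
extends agreement with `g` from the generated submonoid to its saturation. -/
lemma agree_on_saturationIn {A K P : Type*} [AddCommGroup A] [AddCommGroup K]
    [AddCommMonoid P] (hK : ∀ (n : ℕ), 1 ≤ n → ∀ x : K, n • x = 0 → x = 0)
    (ι : P →+ K) (S : Set A) (ψ : ↥(AddSubmonoid.closure S).saturationIn →+ P) (g : A →+ K)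
    (h : ∀ x ∈ S, ∀ hx : x ∈ (AddSubmonoid.closure S).saturationIn, ι (ψ ⟨x, hx⟩) = g x)
    (x : A) (hx : x ∈ (AddSubmonoid.closure S).saturationIn) : ι (ψ ⟨x, hx⟩) = g x := by
  have hsub : ∀ y ∈ AddSubmonoid.closure S, y ∈ (AddSubmonoid.closure S).saturationIn :=
    fun y hy => ⟨1, le_refl 1, by simpa using hy⟩
  have key : ∀ y (hy : y ∈ AddSubmonoid.closure S), ι (ψ ⟨y, hsub y hy⟩) = g y := by
    intro y hy
    induction hy using AddSubmonoid.closure_induction with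
    | mem y hy => exact h y hy _
    | zero => exact (map_zero (ι.comp ψ)).trans (map_zero g).symm
    | add y z hy hz ihy ihz =>
      rw [map_add, ← ihy, ← ihz, ← map_add, ← map_add]
      rfl
  obtain ⟨n, hn, hnx⟩ := id hx
  have hn' := key _ hnx
  have hs : (⟨n • x, hsub _ hnx⟩ : ↥(AddSubmonoid.closure S).saturationIn) = n • ⟨x, hx⟩ := rfl
  rw [hs, map_nsmul, map_nsmul, map_nsmul] at hn'
  rw [← sub_eq_zero]
  exact hK n hn _ (by rw [smul_sub, hn', sub_self])

/-- A group homomorphism to the Grothendieck group of a saturated monoid `P` that sends a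
generating set into `P` restricts to a homomorphism from the saturation to `P`. -/
lemma exists_lift_saturationIn {A P : Type*} [AddCommGroup A] [AddCancelCommMonoid P]
    (hsat : IsSaturatedAddMonoid P) (S : Set A) (g : A →+ Algebra.GrothendieckAddGroup P)
    (hg : ∀ x ∈ S, ∃ a : P, of a = g x) :
    ∃ ψ : ↥(AddSubmonoid.closure S).saturationIn →+ P, ∀ x, of (ψ x) = g x := by
  have hN : ∀ x ∈ AddSubmonoid.closure S, ∃ a : P, of a = g x := by
    have hle : AddSubmonoid.closure S ≤ (AddMonoidHom.mrange (of (M := P))).comap g :=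
      AddSubmonoid.closure_le.2 hg
    exact hle
  have hsat' : ∀ x : ↥(AddSubmonoid.closure S).saturationIn, ∃ a : P, of a = g x := by
    rintro ⟨x, n, hn, hnx⟩
    obtain ⟨a, ha⟩ := hN _ hnx
    exact hsat (g x) n hn ⟨a, ha.trans (map_nsmul g n x)⟩
  choose ψ hψ using hsat'
  refine ⟨{ toFun := ψ, map_zero' := ?_, map_add' := ?_ }, hψ⟩
  · apply Algebra.GrothendieckAddGroup.of_injective
    rw [hψ, map_zero]
    exact map_zero g
  · intro x y
    apply Algebra.GrothendieckAddGroup.of_injective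
    rw [map_add, hψ, hψ, hψ]
    exact map_add g _ _

/-- The group-level universal property of `B`, with torsion-free target `K`. -/
lemma exists_hom_B (G : LogCombType) (Vmax : Set G.V) {K : Type*} [AddCommGroup K]
    (hK : ∀ (n : ℕ), 1 ≤ n → ∀ x : K, n • x = 0 → x = 0)
    (a : G.V → K) (r : G.E → K) (hVn : ∀ v ∈ G.Vn, a v = 0)
    (hrel : ∀ l : G.E, a (G.tgt l) = a (G.src l) + G.c l • r l)
    (hmaxeq : ∀ v₁ ∈ Vmax, ∀ v₂ ∈ Vmax, a v₁ = a v₂) :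
    ∃ g : G.B Vmax →+ K,
      (∀ v, g (G.qB Vmax (G.eA v)) = a v) ∧ ∀ l, g (G.qB Vmax (G.ρA l)) = r l := by
  let f : G.Free →+ K := FreeAbelianGroup.lift (Sum.elim a r)
  have hfe : ∀ v, f (G.eFree v) = a v := fun v => FreeAbelianGroup.lift_apply_of _ _
  have hfr : ∀ l, f (G.ρFree l) = r l := fun l => FreeAbelianGroup.lift_apply_of _ _
  have hf : G.rels ≤ f.ker := by
    refine (AddSubgroup.closure_le _).2 ?_
    rintro x (⟨v, hv, rfl⟩ | ⟨l, rfl⟩)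
    · exact (hfe v).trans (hVn v hv)
    · change f _ = 0
      rw [map_sub, map_add, map_nsmul, hfe, hfe, hfr, hrel, sub_self]
  obtain ⟨gA, hgA⟩ := exists_descend hK G.rels f hf
  have hgAe : ∀ v, gA (G.eA v) = a v := fun v => (hgA _).trans (hfe v)
  have hsim : G.simRel Vmax ≤ gA.ker := by
    refine (AddSubgroup.closure_le _).2 ?_
    rintro x ⟨v₁, h₁, v₂, h₂, rfl⟩
    change gA _ = 0
    rw [map_sub, hgAe, hgAe, hmaxeq v₁ h₁ v₂ h₂, sub_self]
  obtain ⟨gB, hgB⟩ := exists_descend hK (G.simRel Vmax) gA hsim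
  exact ⟨gB, fun v => (hgB _).trans (hgAe v), fun l => (hgB _).trans ((hgA _).trans (hfr l))⟩

lemma eA_mem_N (G : LogCombType) (v : G.V) : G.eA v ∈ G.N :=
  AddSubmonoid.subset_closure (Or.inl ⟨v, rfl⟩)

lemma qB_mem_maxMonoid (G : LogCombType) (Vmax : Set G.V) (v₀ : G.V) (x : G.A)
    (hx : x ∈ G.minMonoid) : G.qB Vmax x ∈ G.maxMonoid Vmax v₀ := by
  obtain ⟨n, hn, hnx⟩ := hx
  refine ⟨n, hn, AddSubmonoid.subset_closure (Or.inl ⟨n • x, hnx, ?_⟩)⟩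
  rw [map_nsmul]

end LogCombType

/-- Universal property of the minimal monoid with uniform maximal
degeneracy: with `P` cancellative, torsion-free and saturated, and elements
`ē_v, ρ̄_l` satisfying the relations of `G`, all maximal degeneracies equal, and
`ē_max − ē_v ∈ P` for all `v`, the quotient map `q` sends `M̄(G)` into `M̄(G, V_max)`,
and the canonical homomorphism `φ : M̄(G) → P` factors uniquely through a
homomorphism `φ_max : M̄(G, V_max) → P`, which sends `e_max − q(e_v)` to `p_v`. -/
theorem LogCombType.maxMonoid_universal (G : LogCombType)
    (Vmax : Set G.V) (v₀ : G.V) (hv₀ : v₀ ∈ Vmax)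
    (P : Type*) [AddCancelCommMonoid P]
    (htf : ∀ (n : ℕ), 1 ≤ n → ∀ p q : P, n • p = n • q → p = q)
    (hsat : IsSaturatedAddMonoid P)
    (ebar : G.V → P) (ρbar : G.E → P)
    (hVn : ∀ v ∈ G.Vn, ebar v = 0)
    (hrel : ∀ l : G.E, ebar (G.tgt l) = ebar (G.src l) + G.c l • ρbar l)
    (hmaxeq : ∀ v₁ ∈ Vmax, ∀ v₂ ∈ Vmax, ebar v₁ = ebar v₂)
    (p : G.V → P) (hp : ∀ v : G.V, ebar v₀ = ebar v + p v) :
    -- `q` maps `M̄(G)` into `M̄(G, V_max)`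
    (∀ x ∈ G.minMonoid, G.qB Vmax x ∈ G.maxMonoid Vmax v₀) ∧
    -- factorization of the canonical homomorphism `φ`
    (∀ φ : ↥G.minMonoid →+ P,
      (∀ (v : G.V) (h : G.eA v ∈ G.minMonoid), φ ⟨G.eA v, h⟩ = ebar v) →
      (∀ (l : G.E) (h : G.ρA l ∈ G.minMonoid), φ ⟨G.ρA l, h⟩ = ρbar l) →
      (∃! φmax : ↥(G.maxMonoid Vmax v₀) →+ P,
          ∀ (x : G.A) (hx : x ∈ G.minMonoid) (hqx : G.qB Vmax x ∈ G.maxMonoid Vmax v₀),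
            φmax ⟨G.qB Vmax x, hqx⟩ = φ ⟨x, hx⟩) ∧
      -- moreover, `φ_max` sends `e_max − q(e_v)` to `p_v`
      (∀ φmax : ↥(G.maxMonoid Vmax v₀) →+ P,
        (∀ (x : G.A) (hx : x ∈ G.minMonoid) (hqx : G.qB Vmax x ∈ G.maxMonoid Vmax v₀),
            φmax ⟨G.qB Vmax x, hqx⟩ = φ ⟨x, hx⟩) →
        ∀ (v : G.V) (h : G.emaxB Vmax v₀ - G.qB Vmax (G.eA v) ∈ G.maxMonoid Vmax v₀),
          φmax ⟨G.emaxB Vmax v₀ - G.qB Vmax (G.eA v), h⟩ = p v)) := by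
  have hK := LogCombType.grothendieck_torsionFree htf
  let ι : P →+ Algebra.GrothendieckAddGroup P := Algebra.GrothendieckAddGroup.of
  have hι : Function.Injective ι := Algebra.GrothendieckAddGroup.of_injective
  obtain ⟨g, hge, hgρ⟩ := G.exists_hom_B Vmax hK (fun v => ι (ebar v)) (fun l => ι (ρbar l))
    (fun v hv => by simp only [hVn v hv, map_zero])
    (fun l => by simp only [hrel l, map_add, map_nsmul])
    (fun v₁ h₁ v₂ h₂ => congrArg ι (hmaxeq v₁ h₁ v₂ h₂))
  have hgp : ∀ v, g (G.emaxB Vmax v₀ - G.qB Vmax (G.eA v)) = ι (p v) := by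
    intro v
    rw [map_sub, LogCombType.emaxB, hge, hge, hp v, map_add, add_sub_cancel_left]
  have hmin : ∀ x ∈ G.N, x ∈ G.minMonoid := fun x hx => ⟨1, le_refl 1, by simpa using hx⟩
  refine ⟨G.qB_mem_maxMonoid Vmax v₀, fun φ hφe hφρ => ?_⟩
  have hφ : ∀ x (hx : x ∈ G.minMonoid), ι (φ ⟨x, hx⟩) = g (G.qB Vmax x) := by
    refine LogCombType.agree_on_saturationIn hK ι _ φ (g.comp (G.qB Vmax)) ?_
    rintro x (⟨v, rfl⟩ | ⟨l, rfl⟩) hx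
    · exact (congrArg ι (hφe v hx)).trans (hge v).symm
    · exact (congrArg ι (hφρ l hx)).trans (hgρ l).symm
  -- every factorization of `φ` is the restriction of `g`
  have hrigid : ∀ ψ : ↥(G.maxMonoid Vmax v₀) →+ P,
      (∀ (x : G.A) (hx : x ∈ G.minMonoid) (hqx : G.qB Vmax x ∈ G.maxMonoid Vmax v₀),
        ψ ⟨G.qB Vmax x, hqx⟩ = φ ⟨x, hx⟩) →
      ∀ y (hy : y ∈ G.maxMonoid Vmax v₀), ι (ψ ⟨y, hy⟩) = g y := by
    intro ψ hψ
    refine LogCombType.agree_on_saturationIn hK ι _ ψ g ?_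
    rintro y (⟨x, hx, rfl⟩ | ⟨v, rfl⟩) hy
    · exact (congrArg ι (hψ x (hmin x hx) hy)).trans (hφ x _)
    · have hq : ∀ w, ∃ hw : G.qB Vmax (G.eA w) ∈ G.maxMonoid Vmax v₀,
          ψ ⟨G.qB Vmax (G.eA w), hw⟩ = ebar w := fun w =>
        ⟨G.qB_mem_maxMonoid Vmax v₀ _ (hmin _ (G.eA_mem_N w)),
          (hψ _ (hmin _ (G.eA_mem_N w)) _).trans (hφe w _)⟩
      obtain ⟨hv, hψv⟩ := hq v
      obtain ⟨h0, hψ0⟩ := hq v₀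
      have hsum : (⟨G.qB Vmax (G.eA v), hv⟩ : ↥(G.maxMonoid Vmax v₀)) + ⟨_, hy⟩ =
          ⟨G.qB Vmax (G.eA v₀), h0⟩ := Subtype.ext (add_sub_cancel _ _)
      have hψsum := congrArg ψ hsum
      rw [map_add, hψv, hψ0, hp v] at hψsum
      exact (congrArg ι (add_left_cancel hψsum)).trans (hgp v).symm
  refine ⟨?_, fun ψ hψ v h => hι ((hrigid ψ hψ _ h).trans (hgp v))⟩
  obtain ⟨ψ, hψ⟩ := LogCombType.exists_lift_saturationIn hsat
    ((G.qB Vmax '' (G.N : Set G.A)) ∪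
      Set.range fun v : G.V => G.emaxB Vmax v₀ - G.qB Vmax (G.eA v)) g (by
    rintro y (⟨x, hx, rfl⟩ | ⟨v, rfl⟩)
    · exact ⟨φ ⟨x, hmin x hx⟩, hφ x _⟩
    · exact ⟨p v, (hgp v).symm⟩)
  have hfac : ∀ (x : G.A) (hx : x ∈ G.minMonoid) (hqx : G.qB Vmax x ∈ G.maxMonoid Vmax v₀),
      ψ ⟨G.qB Vmax x, hqx⟩ = φ ⟨x, hx⟩ :=
    fun x hx hqx => hι ((hψ ⟨_, hqx⟩).trans (hφ x hx).symm)
  exact ⟨ψ, hfac, fun ψ' hψ' => AddMonoidHom.ext fun y =>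
    hι ((hrigid ψ' hψ' y y.2).trans (hψ y).symm)⟩
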